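/- arXiv:1810.06864 — 4 statements merged into one kernel-verified Lean document; each statement's English description precedes it below -/
import Mathlib

section
/- Let G be a finite graph on n vertices, let k be a nonnegative integer, and let (T,β) be a tree decomposition of G in which every adhesion has at most k vertices. Let s be a node of T and let Z₁, Z₂ ⊆ β(s) with |Z₁| = |Z₂| ≤ k+1. Suppose there exist a separation (A₁,A₂) of G and a family {P_x}_{x ∈ X} of pairwise vertex-disjoint Z₁–Z₂ paths, where X = A₁ ∩ A₂, such that Z₁ ⊆ A₁, Z₂ ⊆ A₂, |X| < |Z₁|, and x ∈ V(P_x) for every x ∈ X. Then there exists a tree decomposition (T′,β′) of G in which every adhesion has at most k vertices, T′ has at most n+1 nodes, and Φ_{G,k}(T′,β′) < Φ_{G,k}(T,β). -/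
/-- A separation of a graph `G`. -/
def IsSeparation {V : Type} (G : SimpleGraph V) (A B : Set V) : Prop :=
  A ∪ B = Set.univ ∧ ∀ u v : V, G.Adj u v → u ∈ A \ B → v ∉ B \ A

/-- An (unrooted) tree decomposition of `G`. -/
structure IsTreeDecomp {V ι : Type} (G : SimpleGraph V) (T : SimpleGraph ι)
    (β : ι → Set V) : Prop where
  isTree : T.IsTree
  exists_bag : ∀ v : V, ∃ t : ι, v ∈ β t
  adj_bag : ∀ u v : V, G.Adj u v → ∃ t : ι, u ∈ β t ∧ v ∈ β t
  bag_connected : ∀ (v : V) (t₁ t₂ : ι), v ∈ β t₁ → v ∈ β t₂ →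
    ∃ p : T.Walk t₁ t₂, ∀ s ∈ p.support, v ∈ β s

/-- `Φ¹_{G,k}(T,β) = Σ_t max(0, |β(t)| − (2k+1))` (with truncated subtraction). -/
noncomputable def phi1 {V ι : Type} (k : ℕ) (β : ι → Set V) : ℕ :=
  ∑ᶠ t : ι, ((β t).ncard - (2 * k + 1))

/-- `Φ²_{G,k}(T,β) = Σ_t (2^{min(|β(t)|, 2k+1)} − 1)`. -/
noncomputable def phi2 {V ι : Type} (k : ℕ) (β : ι → Set V) : ℕ :=
  ∑ᶠ t : ι, (2 ^ min ((β t).ncard) (2 * k + 1) - 1)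

/-- `Φ_{G,k}(T,β) = 2^{2k+1}·(n+1)·Φ¹ + Φ²`. -/
noncomputable def phi {V ι : Type} (n k : ℕ) (β : ι → Set V) : ℕ :=
  2 ^ (2 * k + 1) * (n + 1) * phi1 k β + phi2 k β

/-!
Write `X = A₁ ∩ A₂` and root `T` at `s`. Take one copy of `T` for each side of the separation,
joined at their roots; restrict the bags of each copy to its side and add every `x ∈ X` to all bags
on the way from its occurrences up to the roots. The paths `P_x` leave the root bag on both sides,
so if `x ∈ X` occurs below a node `t`, then `P_x` meets the adhesion set above `t` on both sides.
Hence on each side there are at least as many vertices to discard there as there are vertices of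
`X` to add: adhesions and bags do not grow, and both copies of the root bag shrink since
`|X| < |Z₁| = |Z₂|`.

If one copy of a bag does not shrink, then the other copy is contained in the bag of its parent.
Contracting edges until no bag contains another one therefore keeps, for each bag `β t`, either at
most one bag no larger than `β t`, or two strictly smaller ones with at most `|β t| + 2k` vertices
in total. In both cases the contribution to `Φ` does not increase, and it drops at the root.
Distinct bags of a decomposition without inclusions have distinct topmost vertices, apart from the
root bag, which bounds the number of nodes by `n + 1`.
-/

section Counting

theorem sum_le_sum_of_mutual_domination {α ι κ M : Type*} [PartialOrder α] [AddCommMonoid M]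
    [PartialOrder M] [IsOrderedAddMonoid M] [CanonicallyOrderedAdd M] [Fintype κ]
    {B : ι → α} {s : Finset ι} {γ : κ → α}
    (hγ : ∀ x y, γ x ≤ γ y → x = y) (hγB : ∀ j, ∃ i ∈ s, γ j ≤ B i)
    (hBγ : ∀ i ∈ s, ∃ j, B i ≤ γ j) (w : α → M) :
    ∑ j, w (γ j) ≤ ∑ i ∈ s, w (B i) := by
  choose f hfs hf using hγB
  have heq (j : κ) : γ j = B (f j) := by
    obtain ⟨j', hj'⟩ := hBγ (f j) (hfs j)
    obtain rfl := hγ j j' ((hf j).trans hj')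
    exact (hf j).antisymm hj'
  have hinj : f.Injective := fun x y hxy => hγ x y (by rw [heq, heq, hxy])
  calc ∑ j, w (γ j) = ∑ i ∈ Finset.univ.map ⟨f, hinj⟩, w (B i) := by simp [heq]
    _ ≤ ∑ i ∈ s, w (B i) := Finset.sum_le_sum_of_subset fun i hi => by
        obtain ⟨j, -, rfl⟩ := Finset.mem_map.1 hi
        exact hfs j

theorem ncard_le_ncard_of_pairwiseDisjoint {α β : Type*} {s : Set α} {t : Set β} (ht : t.Finite)
    {S : α → Set β} (hS : s.PairwiseDisjoint S) (hne : ∀ x ∈ s, (S x ∩ t).Nonempty) :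
    s.ncard ≤ t.ncard := by
  choose f hfS hft using fun x : s => hne x x.2
  have hinj : f.Injective := fun x y hxy =>
    Subtype.ext (hS.elim_set x.2 y.2 (f x) (hfS x) (hxy ▸ hfS y))
  have := ht.to_subtype
  exact Nat.card_le_card_of_injective (Set.codRestrict f t hft) (hinj.codRestrict hft)

/-- The contribution of a bag with `m` vertices to the potential `Φ_{G,k}`. -/
def bagWeight (n k m : ℕ) : ℕ :=
  2 ^ (2 * k + 1) * (n + 1) * (m - (2 * k + 1)) + (2 ^ min m (2 * k + 1) - 1)

variable {n k m m₁ m₂ : ℕ}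

theorem phi_eq_sum_bagWeight {V ι : Type} [Fintype ι] (β : ι → Set V) :
    phi n k β = ∑ t, bagWeight n k (β t).ncard := by
  simp only [phi, phi1, phi2, bagWeight, finsum_eq_sum_of_fintype, Finset.mul_sum,
    Finset.sum_add_distrib]

theorem bagWeight_mono : Monotone (bagWeight n k) := fun a b hab => by
  unfold bagWeight
  gcongr
  norm_num

theorem bagWeight_add_lt (h₁ : m₁ < m) (h₂ : m₂ < m) (h : m₁ + m₂ ≤ m + 2 * k) :
    bagWeight n k m₁ + bagWeight n k m₂ < bagWeight n k m := by
  unfold bagWeight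
  obtain hm | hm := le_or_gt m (2 * k + 1)
  · have hpow (a : ℕ) (ha : a < m) : 2 * 2 ^ a ≤ 2 ^ m := by
      rw [← pow_succ']
      exact Nat.pow_le_pow_right two_pos ha
    have := hpow m₁ h₁
    have := hpow m₂ h₂
    have := Nat.one_le_two_pow (n := m₁)
    have := Nat.one_le_two_pow (n := m₂)
    rw [min_eq_left hm, min_eq_left (h₁.le.trans hm), min_eq_left (h₂.le.trans hm)]
    simp only [Nat.sub_eq_zero_of_le, hm, h₁.le.trans hm, h₂.le.trans hm, mul_zero, zero_add]
    omega
  -- The total excess over `2k + 1` drops by at least one, which outweighs the bounded second term.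
  · have hexcess : (m₁ - (2 * k + 1)) + (m₂ - (2 * k + 1)) + 1 ≤ m - (2 * k + 1) := by omega
    have hC := Nat.mul_le_mul_left (2 ^ (2 * k + 1) * (n + 1)) hexcess
    have hpow (a : ℕ) : 2 ^ min a (2 * k + 1) ≤ 2 ^ (2 * k + 1) :=
      Nat.pow_le_pow_right two_pos (min_le_right _ _)
    have := hpow m₁
    have := hpow m₂
    have := Nat.le_mul_of_pos_right (2 ^ (2 * k + 1)) (Nat.add_one_pos n)
    have := Nat.one_le_two_pow (n := 2 * k + 1)
    rw [min_eq_right hm.le]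
    rw [mul_add, mul_add, mul_one] at hC
    omega

theorem sum_bagWeight_le {μ : Bool → ℕ} (hle : ∀ b, μ b ≤ m) (hsum : ∑ b, μ b ≤ m + 2 * k) :
    ∑ b with μ (!b) < m, bagWeight n k (μ b) ≤ bagWeight n k m := by
  have hmono (b : Bool) := bagWeight_mono (n := n) (k := k) (hle b)
  rw [Fintype.sum_bool] at hsum
  rw [Finset.sum_filter, Fintype.sum_bool]
  by_cases ht : μ true < m <;> by_cases hf : μ false < m
  · simpa [ht, hf] using (bagWeight_add_lt ht hf hsum).le
  all_goals simp [ht, hf, hmono]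

end Counting

/-- A rooted tree on the node set `ι`, encoded by its parent map. The parent of the root is
irrelevant; `depth` is any rank that decreases towards the root, not necessarily the distance. -/
structure ParentTree (ι : Type*) where
  root : ι
  parent : ι → ι
  depth : ι → ℕ
  depth_parent_lt : ∀ x, x ≠ root → depth (parent x) < depth x

namespace ParentTree

section Order

variable {ι : Type*} (R : ParentTree ι) {S : Set ι} {t u x y : ι}

/-- `R.IsParent x y`: the node `x` is the parent of the non-root node `y`. -/
def IsParent (x y : ι) : Prop := y ≠ R.root ∧ R.parent y = x

/-- `R.IsAncestor x y`: the node `x` lies on the path from `y` to the root, `x = y` included. -/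
def IsAncestor : ι → ι → Prop := Relation.ReflTransGen R.IsParent

/-- The underlying unrooted tree. -/
def graph : SimpleGraph ι := SimpleGraph.fromRel R.IsParent

/-- `R.IsTop S t`: the node `t ∈ S` is reached from every node of `S` by climbing inside `S`.
Such a `t` exists iff `S` induces a nonempty subtree. -/
def IsTop (S : Set ι) (t : ι) : Prop :=
  t ∈ S ∧ ∀ y ∈ S, y ≠ t → y ≠ R.root ∧ R.parent y ∈ S

variable {R}

theorem parent_ne (hx : x ≠ R.root) : R.parent x ≠ x := fun h =>
  (R.depth_parent_lt x hx).ne (congrArg R.depth h)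

theorem induction_root {motive : ι → Prop} (root : motive R.root)
    (parent : ∀ x, x ≠ R.root → motive (R.parent x) → motive x) (x : ι) : motive x := by
  induction hn : R.depth x using Nat.strong_induction_on generalizing x with
  | _ n ih =>
    by_cases hx : x = R.root
    · exact hx ▸ root
    · exact parent x hx (ih _ (hn ▸ R.depth_parent_lt x hx) _ rfl)

theorem isAncestor_root (x : ι) : R.IsAncestor R.root x :=
  induction_root .refl (fun _ hx h => h.tail ⟨hx, rfl⟩) x

theorem IsAncestor.of_parent (hx : x ≠ R.root) (h : R.IsAncestor x y) :
    R.IsAncestor (R.parent x) y :=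
  .head ⟨hx, rfl⟩ h

theorem IsAncestor.parent_of_ne (h : R.IsAncestor x y) (hxy : x ≠ y) :
    R.IsAncestor x (R.parent y) := by
  obtain rfl | ⟨_, h, -, rfl⟩ := Relation.ReflTransGen.cases_tail h
  · exact absurd rfl hxy
  · exact h

theorem IsAncestor.eq_or_depth_lt (h : R.IsAncestor x y) : x = y ∨ R.depth x < R.depth y := by
  induction h with
  | refl => exact .inl rfl
  | tail _ hbc ih =>
    obtain ⟨hc, rfl⟩ := hbc
    have := R.depth_parent_lt _ hc
    obtain rfl | ih := ih <;> right <;> omega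

theorem IsAncestor.depth_le (h : R.IsAncestor x y) : R.depth x ≤ R.depth y := by
  obtain rfl | h := h.eq_or_depth_lt
  exacts [le_rfl, h.le]

theorem IsAncestor.antisymm (hxy : R.IsAncestor x y) (hyx : R.IsAncestor y x) : x = y :=
  hxy.eq_or_depth_lt.resolve_right hyx.depth_le.not_gt

theorem IsAncestor.eq_root (h : R.IsAncestor x R.root) : x = R.root :=
  h.antisymm (isAncestor_root x)

theorem graph_adj_iff : R.graph.Adj x y ↔ R.IsParent x y ∨ R.IsParent y x := by
  rw [graph, SimpleGraph.fromRel_adj, and_iff_right_iff_imp]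
  rintro (⟨hx, rfl⟩ | ⟨hx, rfl⟩)
  exacts [parent_ne hx, (parent_ne hx).symm]

theorem graph_adj_parent (hx : x ≠ R.root) : R.graph.Adj x (R.parent x) :=
  graph_adj_iff.2 (.inr ⟨hx, rfl⟩)

theorem isTop_univ_root : R.IsTop Set.univ R.root :=
  ⟨Set.mem_univ _, fun _ _ hy => ⟨hy, Set.mem_univ _⟩⟩

theorem IsTop.exists_walk (h : R.IsTop S t) (hx : x ∈ S) :
    ∃ q : R.graph.Walk x t, ∀ y ∈ q.support, y ∈ S := by
  by_cases hxt : x = t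
  · subst hxt
    exact ⟨.nil, by simpa using hx⟩
  induction x using induction_root (R := R) with
  | root => exact absurd rfl (h.2 _ hx hxt).1
  | parent x hxr ih =>
    have hpx := (h.2 x hx hxt).2
    by_cases hpt : R.parent x = t
    · subst hpt
      exact ⟨(graph_adj_parent hxr).toWalk, by simp [hx, hpx]⟩
    · obtain ⟨q, hq⟩ := ih hpx hpt
      exact ⟨.cons (graph_adj_parent hxr) q, by simpa [hx] using hq⟩

theorem IsTop.isAncestor (h : R.IsTop S t) (hx : x ∈ S) : R.IsAncestor t x := by
  induction x using induction_root (R := R) with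
  | root =>
    by_contra hne
    exact (h.2 _ hx fun e => hne (e ▸ .refl)).1 rfl
  | parent x hxr ih =>
    by_cases hxt : x = t
    · exact hxt ▸ .refl
    · exact (ih (h.2 x hx hxt).2).tail ⟨hxr, rfl⟩

theorem IsTop.mem_and_parent_mem (h : R.IsTop S u) (htu : ¬ R.IsAncestor t u)
    (hty : R.IsAncestor t y) (hy : y ∈ S) : t ∈ S ∧ R.parent t ∈ S := by
  induction hty with
  | refl => exact ⟨hy, (h.2 t hy fun e => htu (e ▸ .refl)).2⟩
  | tail hab hbc ih =>
    obtain ⟨hc, rfl⟩ := hbc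
    exact ih (h.2 _ hy fun e => htu (e ▸ hab.tail ⟨hc, rfl⟩)).2

theorem isAncestor_of_walk (q : R.graph.Walk x y) (hq : ∀ z ∈ q.support, z ∈ S)
    (hx : x = R.root ∨ R.parent x ∉ S) : R.IsAncestor x y := by
  suffices ∀ a b (q : R.graph.Walk a b), (∀ z ∈ q.support, z ∈ S) → R.IsAncestor x a →
      R.IsAncestor x b from this x y q hq .refl
  intro a b q hq ha
  induction q with
  | nil => exact ha
  | @cons a c b hac q ih =>
    refine ih (fun z hz => hq z (by simp [hz])) ?_
    obtain hc | ⟨har, rfl⟩ := graph_adj_iff.1 hac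
    · exact ha.tail hc
    · refine ha.parent_of_ne ?_
      rintro rfl
      exact hx.elim har (· (hq _ (by simp)))

theorem exists_isTop (hne : S.Nonempty)
    (hS : ∀ x ∈ S, ∀ y ∈ S, ∃ q : R.graph.Walk x y, ∀ z ∈ q.support, z ∈ S) :
    ∃ t, R.IsTop S t := by
  obtain ⟨t, ht, hmin⟩ := exists_minimalFor_of_wellFoundedLT (· ∈ S) R.depth hne
  have htr : t = R.root ∨ R.parent t ∉ S := by
    by_contra! h
    exact (hmin h.2 (R.depth_parent_lt t h.1).le).not_gt (R.depth_parent_lt t h.1)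
  refine ⟨t, ht, fun y hy hyt => ?_⟩
  by_contra! h
  obtain ⟨q, hq⟩ := hS t ht y hy
  obtain ⟨q', hq'⟩ := hS y hy t ht
  have hyr : y = R.root ∨ R.parent y ∉ S := or_iff_not_imp_left.2 h
  exact hyt ((isAncestor_of_walk q' hq' hyr).antisymm (isAncestor_of_walk q hq htr))

theorem graph_isTree (R : ParentTree ι) : R.graph.IsTree := by
  refine SimpleGraph.isTree_of_minimal_connected ⟨?_, fun H hH hle => ?_⟩
  · have hroot (x : ι) : R.graph.Reachable x R.root :=
      (isTop_univ_root.exists_walk (Set.mem_univ x)).choose.reachable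
    exact { preconnected := fun x y => (hroot x).trans (hroot y).symm, nonempty := ⟨R.root⟩ }
  · have hparent (x : ι) (hx : x ≠ R.root) : H.Adj x (R.parent x) := by
      obtain ⟨q⟩ := hH.preconnected x R.root
      obtain ⟨d, -, hd₁, hd₂⟩ := q.exists_boundary_dart {y | R.IsAncestor x y} .refl
        fun h => hx (IsAncestor.eq_root h)
      obtain h | ⟨-, hp⟩ := graph_adj_iff.1 (hle d.adj)
      · exact absurd (Relation.ReflTransGen.tail hd₁ h) hd₂
      · have hxd : x = d.fst := by
          by_contra hne
          exact hd₂ (hp ▸ IsAncestor.parent_of_ne hd₁ hne)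
        rw [hxd, hp]
        exact d.adj
    intro x y hxy
    obtain ⟨hy, rfl⟩ | ⟨hx, rfl⟩ := graph_adj_iff.1 hxy
    exacts [(hparent y hy).symm, hparent x hx]

theorem exists_root_eq_graph_eq {T : SimpleGraph ι} (hT : T.IsTree) (s : ι) :
    ∃ R : ParentTree ι, R.root = s ∧ R.graph = T := by
  have hcloser (x : ι) : ∃ y, x ≠ s → T.Adj x y ∧ T.dist y s < T.dist x s := by
    obtain ⟨w, hw⟩ := hT.connected.exists_walk_length_eq_dist x s
    cases w with
    | nil => exact ⟨s, fun h => absurd rfl h⟩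
    | @cons _ y _ hxy q =>
      have := SimpleGraph.dist_le q
      rw [SimpleGraph.Walk.length_cons] at hw
      exact ⟨y, fun _ => ⟨hxy, by omega⟩⟩
  choose p hp using hcloser
  let R : ParentTree ι := ⟨s, p, fun x => T.dist x s, fun x hx => (hp x hx).2⟩
  have hle : R.graph ≤ T := fun x y hxy => by
    obtain ⟨hy, rfl⟩ | ⟨hx, rfl⟩ := graph_adj_iff.1 hxy
    exacts [(hp y hy).1.symm, (hp x hx).1]
  refine ⟨R, rfl, hle.antisymm ?_⟩
  exact (SimpleGraph.isTree_iff_minimal_connected.1 hT).2 R.graph_isTree.connected hle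

end Order

section Constructions

variable {ι : Type*} (R : ParentTree ι) {t : ι}

open Classical in
/-- The tree obtained by deleting the non-root node `t` and attaching its children to its parent,
that is, by contracting the edge from `t` to its parent. -/
noncomputable def erase (ht : t ≠ R.root) : ParentTree {x // x ≠ t} where
  root := ⟨R.root, ht.symm⟩
  parent x := if hx : R.parent x = t then ⟨R.parent t, parent_ne ht⟩ else ⟨R.parent x, hx⟩
  depth x := R.depth x
  depth_parent_lt x hx := by
    have hlt := R.depth_parent_lt x fun h => hx (Subtype.ext h)
    split_ifs with hxt
    · rw [hxt] at hlt
      exact (R.depth_parent_lt t ht).trans hlt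
    · exact hlt

open Classical in
/-- Two disjoint copies of the tree, joined by an edge between the two copies of the root, with
root `(R.root, true)`. -/
noncomputable def double : ParentTree (ι × Bool) where
  root := (R.root, true)
  parent x := if x.1 = R.root then (R.root, true) else (R.parent x.1, x.2)
  depth x := R.depth x.1 + if x.2 then 0 else 1
  depth_parent_lt := by
    rintro ⟨t, b⟩ hx
    obtain rfl | ht := eq_or_ne t R.root
    · cases b <;> simp_all
    · have := R.depth_parent_lt t ht
      simp only [if_neg ht]
      omega

variable {R} {x : {x // x ≠ t}} {b : Bool}

theorem coe_parent_erase_of_eq (ht : t ≠ R.root) (hx : R.parent x = t) :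
    ((R.erase ht).parent x : ι) = R.parent t := by
  simp [erase, hx]

theorem coe_parent_erase_of_ne (ht : t ≠ R.root) (hx : R.parent x ≠ t) :
    ((R.erase ht).parent x : ι) = R.parent x := by
  simp [erase, hx]

theorem parent_double_root : R.double.parent (R.root, b) = (R.root, true) :=
  if_pos rfl

theorem parent_double_of_ne (ht : t ≠ R.root) : R.double.parent (t, b) = (R.parent t, b) :=
  if_neg ht

end Constructions

end ParentTree

section Separation

variable {V : Type} {G : SimpleGraph V} {A B : Set V}

theorem IsSeparation.symm (h : IsSeparation G A B) : IsSeparation G B A :=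
  ⟨Set.union_comm A B ▸ h.1, fun u v huv hu hv => h.2 v u huv.symm hv hu⟩

theorem IsSeparation.mem_or_mem (h : IsSeparation G A B) (v : V) : v ∈ A ∨ v ∈ B :=
  h.1.symm.subset (Set.mem_univ v)

theorem IsSeparation.mem_and_mem_of_adj (h : IsSeparation G A B) {u v : V} (huv : G.Adj u v) :
    u ∈ A ∧ v ∈ A ∨ u ∈ B ∧ v ∈ B := by
  have := h.2 u v huv
  have := h.2 v u huv.symm
  have := h.mem_or_mem u
  have := h.mem_or_mem v
  simp only [Set.mem_sdiff] at *
  tauto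

theorem IsSeparation.exists_mem_support_inter (h : IsSeparation G A B) {a b : V}
    (q : G.Walk a b) (ha : a ∈ A) (hb : b ∈ B) : ∃ v ∈ q.support, v ∈ A ∩ B := by
  by_cases hbA : b ∈ A
  · exact ⟨b, q.end_mem_support, hbA, hb⟩
  · obtain ⟨d, hd, hfst, hsnd⟩ := q.exists_boundary_dart A ha hbA
    have hfst' := ((h.mem_and_mem_of_adj d.adj).resolve_left fun h => hsnd h.2).1
    exact ⟨d.fst, q.dart_fst_mem_support_of_mem_darts hd, hfst, hfst'⟩

theorem IsSeparation.exists_walk_support_subset (h : IsSeparation G A B) {a b x : V}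
    {q : G.Walk a b} (hq : q.IsPath) (hxq : x ∈ q.support)
    (huniq : ∀ v ∈ q.support, v ∈ A ∩ B → v = x) (hx : x ∈ A) (ha : a ∈ A) :
    ∃ p : G.Walk a x, ∀ v ∈ p.support, v ∈ q.support ∧ v ∈ A := by
  classical
  let p := q.takeUntil x hxq
  have hpq : ∀ v ∈ p.support, v ∈ q.support := q.support_takeUntil_subset_support hxq
  refine ⟨p, fun v hv => ⟨hpq v hv, (h.mem_or_mem v).elim id fun hvB => ?_⟩⟩
  obtain rfl | hvx := eq_or_ne v x
  · exact hx
  obtain ⟨z, hz, hzAB⟩ := h.exists_mem_support_inter (p.takeUntil v hv) ha hvB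
  obtain rfl := huniq z (hpq z (p.support_takeUntil_subset_support hv hz)) hzAB
  exact absurd hz
    (SimpleGraph.Walk.endpoint_notMem_support_takeUntil (hq.takeUntil hxq) hv hvx.symm)

theorem IsSeparation.exists_pairwiseDisjoint_walk (h : IsSeparation G A B) {Z₁ Z₂ : Set V}
    (hZ₁ : Z₁ ⊆ A) (hZ₂ : Z₂ ⊆ B) {e₁ e₂ : (A ∩ B : Set V) → V} (he₁ : ∀ x, e₁ x ∈ Z₁)
    (he₂ : ∀ x, e₂ x ∈ Z₂) (P : ∀ x, G.Walk (e₁ x) (e₂ x)) (hP : ∀ x, (P x).IsPath)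
    (hthrough : ∀ x, (x : V) ∈ (P x).support)
    (hdisj : ∀ x y, x ≠ y → ∀ v ∈ (P x).support, v ∉ (P y).support) :
    ∃ S : V → Set V, (A ∩ B).PairwiseDisjoint S ∧
      (∀ x ∈ A ∩ B, ∃ z ∈ Z₁, ∃ q : G.Walk z x, ∀ v ∈ q.support, v ∈ S x ∩ A) ∧
      (∀ x ∈ A ∩ B, ∃ z ∈ Z₂, ∃ q : G.Walk z x, ∀ v ∈ q.support, v ∈ S x ∩ B) := by
  have huniq (x) : ∀ v ∈ (P x).support, v ∈ A ∩ B → v = x := fun v hv hvAB =>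
    by_contra fun hne => hdisj x ⟨v, hvAB⟩ (fun e => hne (by rw [e])) v hv (hthrough ⟨v, hvAB⟩)
  refine ⟨fun x => {v | ∃ hx : x ∈ A ∩ B, v ∈ (P ⟨x, hx⟩).support}, ?_, fun x hx => ?_,
    fun x hx => ?_⟩
  · rintro x hx y hy hxy
    refine Set.disjoint_left.2 fun v ⟨_, hvx⟩ ⟨_, hvy⟩ => ?_
    exact hdisj ⟨x, hx⟩ ⟨y, hy⟩ (by simpa using hxy) v hvx hvy
  · obtain ⟨q, hq⟩ := h.exists_walk_support_subset (hP ⟨x, hx⟩) (hthrough ⟨x, hx⟩)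
      (huniq ⟨x, hx⟩) hx.1 (hZ₁ (he₁ _))
    exact ⟨_, he₁ _, q, fun v hv => ⟨⟨hx, (hq v hv).1⟩, (hq v hv).2⟩⟩
  · obtain ⟨q, hq⟩ := h.symm.exists_walk_support_subset (q := (P ⟨x, hx⟩).reverse)
      (hP _).reverse (by simpa using hthrough ⟨x, hx⟩)
      (by simpa [and_comm] using huniq ⟨x, hx⟩) hx.2 (hZ₂ (he₂ _))
    exact ⟨_, he₂ _, q, fun v hv => ⟨⟨hx, by simpa using (hq v hv).1⟩, (hq v hv).2⟩⟩

end Separation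

section TreeDecomposition

variable {V ι : Type} {G : SimpleGraph V} {T : SimpleGraph ι} {R : ParentTree ι}
  {β : ι → Set V} {k : ℕ} {t : ι}

/-- The decomposition with tree `T` and bags `β` has adhesion at most `k`. -/
def HasAdhesionLE (T : SimpleGraph ι) (β : ι → Set V) (k : ℕ) : Prop :=
  ∀ s t : ι, T.Adj s t → (β s ∩ β t).ncard ≤ k

theorem ParentTree.hasAdhesionLE_graph_iff : HasAdhesionLE R.graph β k ↔
    ∀ x, x ≠ R.root → (β x ∩ β (R.parent x)).ncard ≤ k := by
  refine ⟨fun h x hx => h _ _ (graph_adj_parent hx), fun h x y hxy => ?_⟩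
  obtain ⟨hy, rfl⟩ | ⟨hx, rfl⟩ := graph_adj_iff.1 hxy
  exacts [Set.inter_comm _ _ ▸ h y hy, h x hx]

theorem ParentTree.isTreeDecomp_graph (htop : ∀ v, ∃ t, R.IsTop {t | v ∈ β t} t)
    (hadj : ∀ u v, G.Adj u v → ∃ t, u ∈ β t ∧ v ∈ β t) : IsTreeDecomp G R.graph β where
  isTree := R.graph_isTree
  exists_bag v := (htop v).imp fun _ ht => ht.1
  adj_bag := hadj
  bag_connected v x y hx hy := by
    obtain ⟨t, ht⟩ := htop v
    obtain ⟨p, hp⟩ := ht.exists_walk hx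
    obtain ⟨q, hq⟩ := ht.exists_walk hy
    refine ⟨p.append q.reverse, fun z hz => ?_⟩
    rw [SimpleGraph.Walk.mem_support_append_iff, SimpleGraph.Walk.support_reverse,
      List.mem_reverse] at hz
    exact hz.elim (hp z) (hq z)

theorem IsTreeDecomp.exists_isTop (h : IsTreeDecomp G R.graph β) (v : V) :
    ∃ t, R.IsTop {t | v ∈ β t} t :=
  ParentTree.exists_isTop (h.exists_bag v) fun x hx y hy => h.bag_connected v x y hx hy

theorem IsTreeDecomp.isSeparation_biUnion (h : IsTreeDecomp G T β) (S : Set ι) :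
    IsSeparation G (⋃ t ∈ S, β t) (⋃ t ∈ Sᶜ, β t) := by
  refine ⟨Set.eq_univ_of_forall fun v => ?_, fun u v huv hu hv => ?_⟩
  · obtain ⟨t, ht⟩ := h.exists_bag v
    by_cases htS : t ∈ S
    · exact .inl (Set.mem_biUnion htS ht)
    · exact .inr (Set.mem_biUnion (show t ∈ Sᶜ from htS) ht)
  · obtain ⟨t, htu, htv⟩ := h.adj_bag u v huv
    by_cases htS : t ∈ S
    · exact hv.2 (Set.mem_biUnion htS htv)
    · exact hu.2 (Set.mem_biUnion (show t ∈ Sᶜ from htS) htu)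

/-- The union of the bags in the subtree hanging at `t`. -/
def ParentTree.below (R : ParentTree ι) (β : ι → Set V) (t : ι) : Set V :=
  ⋃ y ∈ {y | R.IsAncestor t y}, β y

theorem ParentTree.subset_below : β t ⊆ R.below β t :=
  Set.subset_biUnion_of_mem (u := β) (show R.IsAncestor t t from .refl)

theorem ParentTree.below_subset_below_parent (ht : t ≠ R.root) :
    R.below β t ⊆ R.below β (R.parent t) :=
  Set.biUnion_subset_biUnion_left fun _ => .of_parent ht

theorem IsTreeDecomp.below_inter_subset (h : IsTreeDecomp G R.graph β) :
    R.below β t ∩ (⋃ y ∈ {y | R.IsAncestor t y}ᶜ, β y) ⊆ β t ∩ β (R.parent t) := by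
  rintro v ⟨hv, hv'⟩
  obtain ⟨y, hty, hy⟩ := Set.mem_iUnion₂.1 hv
  obtain ⟨z, htz, hz⟩ := Set.mem_iUnion₂.1 hv'
  obtain ⟨u, hu⟩ := h.exists_isTop v
  exact hu.mem_and_parent_mem (fun htu => htz (htu.trans (hu.isAncestor hz))) hty hy

theorem IsTreeDecomp.erase (h : IsTreeDecomp G R.graph β) (ht : t ≠ R.root)
    (hsub : β t ⊆ β (R.parent t)) : IsTreeDecomp G (R.erase ht).graph fun x => β x := by
  refine ParentTree.isTreeDecomp_graph (fun v => ?_) fun u v huv => ?_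
  · obtain ⟨u, hu, hclimb⟩ := h.exists_isTop v
    have hut : u ≠ t := by
      rintro rfl
      have hanc := ParentTree.IsTop.isAncestor ⟨hu, hclimb⟩ (hsub hu)
      exact hanc.depth_le.not_gt (R.depth_parent_lt u ht)
    refine ⟨⟨u, hut⟩, hu, fun y hy hyu => ?_⟩
    obtain ⟨hyr, hpy⟩ := hclimb y hy fun e => hyu (Subtype.ext e)
    refine ⟨fun e => hyr (congrArg Subtype.val e), ?_⟩
    by_cases hyt : R.parent y = t
    · rw [Set.mem_ofPred_eq, ParentTree.coe_parent_erase_of_eq ht hyt]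
      exact hsub (hyt ▸ hpy)
    · rwa [Set.mem_ofPred_eq, ParentTree.coe_parent_erase_of_ne ht hyt]
  · obtain ⟨x, hux, hvx⟩ := h.adj_bag u v huv
    by_cases hxt : x = t
    · subst hxt
      exact ⟨⟨R.parent x, ParentTree.parent_ne ht⟩, hsub hux, hsub hvx⟩
    · exact ⟨⟨x, hxt⟩, hux, hvx⟩

theorem HasAdhesionLE.erase [Finite V] (hk : HasAdhesionLE R.graph β k)
    (h : IsTreeDecomp G R.graph β) (ht : t ≠ R.root) :
    HasAdhesionLE (R.erase ht).graph (fun x => β x) k := by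
  rw [ParentTree.hasAdhesionLE_graph_iff] at hk ⊢
  intro x hx
  have hxr : (x : ι) ≠ R.root := fun e => hx (Subtype.ext e)
  refine (Set.ncard_le_ncard fun v hv => Set.mem_inter hv.1 ?_).trans (hk x hxr)
  by_cases hxt : R.parent x = t
  · rw [Set.mem_inter_iff, ParentTree.coe_parent_erase_of_eq ht hxt] at hv
    obtain ⟨u, hu⟩ := h.exists_isTop v
    have hux : (x : ι) ≠ u := by
      rintro rfl
      have := (hu.isAncestor hv.2).depth_le
      have := R.depth_parent_lt t ht
      have := R.depth_parent_lt x hxr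
      rw [hxt] at this
      omega
    exact (hu.2 x hv.1 hux).2
  · rw [Set.mem_inter_iff, ParentTree.coe_parent_erase_of_ne ht hxt] at hv
    exact hv.2

theorem IsTreeDecomp.exists_erase [Finite V] (h : IsTreeDecomp G T β) (hk : HasAdhesionLE T β k)
    {x y : ι} (hxy : T.Adj x y) (hsub : β x ⊆ β y) :
    ∃ T' : SimpleGraph {z // z ≠ x},
      IsTreeDecomp G T' (fun z => β z) ∧ HasAdhesionLE T' (fun z => β z) k := by
  obtain ⟨R, rfl, rfl⟩ := ParentTree.exists_root_eq_graph_eq h.isTree y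
  obtain ⟨hroot, -⟩ | ⟨hx, hpx⟩ := ParentTree.graph_adj_iff.1 hxy
  · exact absurd rfl hroot
  · exact ⟨(R.erase hx).graph, h.erase hx (hpx ▸ hsub), hk.erase h hx⟩

theorem IsTreeDecomp.exists_reduced [Finite V] [Finite ι] (h : IsTreeDecomp G T β)
    (hk : HasAdhesionLE T β k) :
    ∃ (κ : Type) (_ : Finite κ) (T' : SimpleGraph κ) (f : κ → ι),
      IsTreeDecomp G T' (β ∘ f) ∧ HasAdhesionLE T' (β ∘ f) k ∧
      (∀ x y, T'.Adj x y → ¬ β (f x) ⊆ β (f y)) ∧ ∀ t, ∃ x, β t ⊆ β (f x) := by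
  induction hn : Nat.card ι using Nat.strong_induction_on generalizing ι with
  | _ n ih =>
    by_cases hred : ∀ x y, T.Adj x y → ¬ β x ⊆ β y
    · exact ⟨ι, ‹_›, T, id, h, hk, hred, fun t => ⟨t, subset_rfl⟩⟩
    push Not at hred
    obtain ⟨x, y, hxy, hsub⟩ := hred
    obtain ⟨T₁, h₁, hk₁⟩ := h.exists_erase hk hxy hsub
    have hcard : Nat.card {z // z ≠ x} < n := hn ▸ Finite.card_subtype_lt (not_not.2 rfl)
    obtain ⟨κ, hκ, T', f, h', hk', hred', hcov⟩ := ih _ hcard h₁ hk₁ rfl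
    refine ⟨κ, hκ, T', Subtype.val ∘ f, h', hk', hred', fun t => ?_⟩
    by_cases htx : t = x
    · obtain ⟨j, hj⟩ := hcov ⟨y, hxy.ne'⟩
      exact ⟨j, htx ▸ hsub.trans hj⟩
    · exact hcov ⟨t, htx⟩

theorem IsTreeDecomp.eq_of_bag_subset (h : IsTreeDecomp G T β)
    (hred : ∀ x y, T.Adj x y → ¬ β x ⊆ β y) {x y : ι} (hsub : β x ⊆ β y) : x = y := by
  obtain ⟨R, rfl, rfl⟩ := ParentTree.exists_root_eq_graph_eq h.isTree y
  by_contra hx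
  refine hred x (R.parent x) (ParentTree.graph_adj_parent hx) fun v hv => ?_
  obtain ⟨u, hu⟩ := h.exists_isTop v
  have hur : u = R.root := (hu.isAncestor (hsub hv)).eq_root
  exact (hu.2 x hv fun e => hx (e.trans hur)).2

theorem IsTreeDecomp.natCard_le [Finite V] (h : IsTreeDecomp G T β)
    (hred : ∀ x y, T.Adj x y → ¬ β x ⊆ β y) : Nat.card ι ≤ Nat.card V + 1 := by
  classical
  obtain ⟨s⟩ := h.isTree.connected.nonempty
  obtain ⟨R, -, rfl⟩ := ParentTree.exists_root_eq_graph_eq h.isTree s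
  have htop (x : {x // x ≠ R.root}) : ∃ v, R.IsTop {t | v ∈ β t} x := by
    obtain ⟨v, hvx, hvp⟩ := Set.not_subset.1 (hred x _ (ParentTree.graph_adj_parent x.2))
    obtain ⟨u, hu⟩ := h.exists_isTop v
    have hxu : (x : ι) = u := by
      by_contra hxu
      exact hvp (hu.2 x hvx hxu).2
    exact ⟨v, hxu ▸ hu⟩
  choose f hf using htop
  have hinj : f.Injective := fun x y hxy => by
    have hy := hf y
    rw [← hxy] at hy
    exact Subtype.ext (((hf x).isAncestor hy.1).antisymm (hy.isAncestor (hf x).1))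
  rw [← Finite.card_option]
  exact Nat.card_le_card_of_injective _
    ((Option.map_injective hinj).comp (Equiv.optionSubtypeNe R.root).symm.injective)

end TreeDecomposition

section Splitting

variable {V ι : Type} {G : SimpleGraph V} {R : ParentTree ι} {β : ι → Set V} {A : Bool → Set V}
  {k : ℕ} {t : ι} {b : Bool} {v : V}

/-- The bags of the decomposition on `R.double` obtained by splitting `β` along the separation
`(A true, A false)`: copy `b` of a bag is restricted to the side `A b`, except that a vertex of
the separator is put into all bags from where it occurs up to the root. -/
def ParentTree.splitBag (R : ParentTree ι) (β : ι → Set V) (A : Bool → Set V) (x : ι × Bool) :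
    Set V :=
  (β x.1 \ A (!x.2)) ∪ ((⋂ b, A b) ∩ R.below β x.1)

/-- On each side of the separation, every adhesion set has at least as many vertices as there are
separator vertices below it. This is what a linkage from the root bag to the separator provides. -/
def ParentTree.IsLinked (R : ParentTree ι) (β : ι → Set V) (A : Bool → Set V) : Prop :=
  ∀ t, t ≠ R.root → ∀ b,
    ((⋂ b, A b) ∩ R.below β t).ncard ≤ (β t ∩ β (R.parent t) ∩ A b).ncard

theorem ParentTree.mem_splitBag_iff_of_notMem (hA : IsSeparation G (A b) (A (!b)))
    (hv : v ∉ A (!b)) {x : ι × Bool} : v ∈ R.splitBag β A x ↔ v ∈ β x.1 ∧ x.2 = b := by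
  have hvX : v ∉ ⋂ b, A b := fun h => hv (Set.mem_iInter.1 h _)
  have hvA : v ∈ A b := (hA.mem_or_mem v).resolve_right hv
  obtain ⟨t, c⟩ := x
  have hc : v ∉ A (!c) ↔ c = b := by
    cases b <;> cases c <;> simp_all
  simp [ParentTree.splitBag, hvX, hc]

theorem ParentTree.mem_splitBag_of_mem (hv : v ∈ β t) (hvA : v ∈ A b) :
    v ∈ R.splitBag β A (t, b) := by
  by_cases hvA' : v ∈ A (!b)
  · exact .inr ⟨Set.mem_iInter.2 (by cases b <;> simp_all), subset_below hv⟩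
  · exact .inl ⟨hv, hvA'⟩

theorem ParentTree.exists_isTop_splitBag (hA : ∀ b, IsSeparation G (A b) (A (!b)))
    (h : IsTreeDecomp G R.graph β) (v : V) : ∃ x, R.double.IsTop {x | v ∈ R.splitBag β A x} x := by
  obtain ⟨u, hu, hclimb⟩ := h.exists_isTop v
  by_cases hvX : v ∈ ⋂ b, A b
  · have hmem {x : ι × Bool} (hx : v ∈ R.below β x.1) : v ∈ R.splitBag β A x := .inr ⟨hvX, hx⟩
    refine ⟨(R.root, true), hmem (Set.mem_biUnion (R.isAncestor_root u) hu), ?_⟩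
    rintro ⟨t, b⟩ hx hne
    have ht : v ∈ R.below β t := hx.elim (fun hx => ParentTree.subset_below hx.1) (·.2)
    refine ⟨hne, hmem ?_⟩
    obtain rfl | htr := eq_or_ne t R.root
    · rwa [ParentTree.parent_double_root]
    · rw [ParentTree.parent_double_of_ne htr]
      exact ParentTree.below_subset_below_parent htr ht
  · obtain ⟨c, hc⟩ : ∃ c, v ∉ A c := not_forall.1 fun h => hvX (Set.mem_iInter.2 h)
    obtain ⟨b, rfl⟩ := Bool.involutive_not.surjective c
    have hmem (x : ι × Bool) := mem_splitBag_iff_of_notMem (R := R) (β := β) (hA b) hc (x := x)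
    refine ⟨(u, b), (hmem _).2 ⟨hu, rfl⟩, ?_⟩
    rintro ⟨t, c⟩ hx hne
    obtain ⟨ht, rfl⟩ := (hmem _).1 hx
    obtain ⟨htr, hpt⟩ := hclimb t ht fun e => hne (by rw [e])
    refine ⟨fun e => htr (congrArg Prod.fst e), (hmem _).2 ?_⟩
    rw [ParentTree.parent_double_of_ne htr]
    exact ⟨hpt, rfl⟩

theorem IsTreeDecomp.splitBag (h : IsTreeDecomp G R.graph β)
    (hA : ∀ b, IsSeparation G (A b) (A (!b))) :
    IsTreeDecomp G R.double.graph (R.splitBag β A) := by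
  refine ParentTree.isTreeDecomp_graph (ParentTree.exists_isTop_splitBag hA h) fun u v huv => ?_
  obtain ⟨t, hu, hv⟩ := h.adj_bag u v huv
  obtain ⟨huA, hvA⟩ | ⟨huA, hvA⟩ := (hA true).mem_and_mem_of_adj huv
  all_goals exact ⟨_, ParentTree.mem_splitBag_of_mem hu huA, ParentTree.mem_splitBag_of_mem hv hvA⟩

theorem IsTreeDecomp.ncard_inter_below_le [Finite V] (h : IsTreeDecomp G R.graph β) {X B : Set V}
    {S : V → Set V} (hS : X.PairwiseDisjoint S)
    (hwalk : ∀ x ∈ X, ∃ z ∈ β R.root, ∃ q : G.Walk z x, ∀ v ∈ q.support, v ∈ S x ∩ B)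
    (ht : t ≠ R.root) :
    (X ∩ R.below β t).ncard ≤ (β t ∩ β (R.parent t) ∩ B).ncard := by
  refine ncard_le_ncard_of_pairwiseDisjoint (Set.toFinite _) (hS.subset Set.inter_subset_left) ?_
  rintro x ⟨hxX, hxt⟩
  obtain ⟨z, hz, q, hq⟩ := hwalk x hxX
  have hroot : R.root ∈ {y | R.IsAncestor t y}ᶜ := fun h => ht (ParentTree.IsAncestor.eq_root h)
  obtain ⟨v, hvq, hvB, hvt⟩ := (h.isSeparation_biUnion {y | R.IsAncestor t y}).symm
    |>.exists_mem_support_inter q (Set.mem_biUnion hroot hz) hxt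
  exact ⟨v, (hq v hvq).1, h.below_inter_subset ⟨hvt, hvB⟩, (hq v hvq).2⟩

theorem HasAdhesionLE.splitBag [Finite V] (hk : HasAdhesionLE R.graph β k)
    (hA : ∀ b, IsSeparation G (A b) (A (!b))) (hX : (⋂ b, A b).ncard ≤ k)
    (hlink : R.IsLinked β A) :
    HasAdhesionLE R.double.graph (R.splitBag β A) k := by
  rw [ParentTree.hasAdhesionLE_graph_iff] at hk ⊢
  rintro ⟨t, b⟩ hx
  obtain rfl | ht := eq_or_ne t R.root
  · have hb : b = false := by
      by_contra hb
      exact hx (by rw [Bool.eq_true_of_not_eq_false hb]; rfl)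
    rw [ParentTree.parent_double_root, hb]
    refine (Set.ncard_le_ncard ?_).trans hX
    rintro v ⟨⟨-, hv⟩ | hv, ⟨-, hv'⟩ | hv'⟩
    exacts [((hA true).mem_or_mem v).elim (absurd · hv) (absurd · hv'), hv'.1, hv.1, hv.1]
  · rw [ParentTree.parent_double_of_ne ht]
    have hsub : R.splitBag β A (t, b) ∩ R.splitBag β A (R.parent t, b) ⊆
        ((β t ∩ β (R.parent t)) \ A (!b)) ∪ ((⋂ b, A b) ∩ R.below β t) := by
      rintro v ⟨⟨hv, hvA⟩ | hv, ⟨hv', -⟩ | ⟨hvX, -⟩⟩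
      exacts [.inl ⟨⟨hv, hv'⟩, hvA⟩, absurd (Set.mem_iInter.1 hvX _) hvA, .inr hv, .inr hv]
    have := Set.ncard_inter_add_ncard_sdiff_eq_ncard (β t ∩ β (R.parent t)) (A (!b))
    have := hlink t ht (!b)
    have := hk t ht
    have := (Set.ncard_le_ncard hsub).trans (Set.ncard_union_le _ _)
    omega

theorem ParentTree.ncard_splitBag [Finite V] :
    (R.splitBag β A (t, b)).ncard =
      (β t \ A (!b)).ncard + ((⋂ b, A b) ∩ R.below β t).ncard :=
  Set.ncard_union_eq <| Set.disjoint_left.2 fun _ h h' => h.2 (Set.mem_iInter.1 h'.1 _)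

theorem ParentTree.ncard_splitBag_lt_iff [Finite V] :
    (R.splitBag β A (t, b)).ncard < (β t).ncard ↔
      ((⋂ b, A b) ∩ R.below β t).ncard < (β t ∩ A (!b)).ncard := by
  rw [ncard_splitBag, ← Set.ncard_inter_add_ncard_sdiff_eq_ncard (β t) (A (!b))]
  omega

theorem ParentTree.ncard_splitBag_le [Finite V]
    (hpull : ∀ b, ((⋂ b, A b) ∩ R.below β t).ncard ≤ (β t ∩ A b).ncard) (b : Bool) :
    (R.splitBag β A (t, b)).ncard ≤ (β t).ncard := by
  rw [ncard_splitBag, ← Set.ncard_inter_add_ncard_sdiff_eq_ncard (β t) (A (!b))]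
  have := hpull (!b)
  omega

theorem ParentTree.sum_ncard_splitBag_le [Finite V] (hA : ∀ b, IsSeparation G (A b) (A (!b)))
    (hX : (⋂ b, A b).ncard ≤ k) :
    ∑ b, (R.splitBag β A (t, b)).ncard ≤ (β t).ncard + 2 * k := by
  have hdisj : Disjoint (β t \ A true) (β t \ A false) := Set.disjoint_left.2 fun v hv hv' =>
    ((hA true).mem_or_mem v).elim hv.2 hv'.2
  have hsub : (β t \ A true) ∪ (β t \ A false) ⊆ β t :=
    Set.union_subset Set.sdiff_subset Set.sdiff_subset
  have hsides := Set.ncard_union_eq hdisj ▸ Set.ncard_le_ncard hsub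
  have hpull : ((⋂ b, A b) ∩ R.below β t).ncard ≤ k :=
    (Set.ncard_le_ncard Set.inter_subset_left).trans hX
  rw [Fintype.sum_bool, ncard_splitBag, ncard_splitBag, Bool.not_true, Bool.not_false]
  omega

theorem ParentTree.splitBag_subset_parent [Finite V] (hA : IsSeparation G (A b) (A (!b)))
    (hlink : R.IsLinked β A) (ht : t ≠ R.root)
    (hle : (β t ∩ A b).ncard ≤ ((⋂ b, A b) ∩ R.below β t).ncard) :
    R.splitBag β A (t, b) ⊆ R.splitBag β A (R.parent t, b) := by
  have hsub : β t ∩ β (R.parent t) ∩ A b ⊆ β t ∩ A b := by gcongr; exact Set.inter_subset_left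
  have heq := Set.eq_of_subset_of_ncard_le hsub (hle.trans (hlink t ht b))
  refine Set.union_subset_union ?_ (Set.inter_subset_inter_right _ (below_subset_below_parent ht))
  rintro v ⟨hv, hvA⟩
  have hvt : v ∈ β t ∩ A b := ⟨hv, (hA.mem_or_mem v).resolve_right hvA⟩
  exact ⟨(heq ▸ hvt).1.2, hvA⟩

theorem ParentTree.exists_splitBag_subset [Finite V] (hA : ∀ b, IsSeparation G (A b) (A (!b)))
    (hlink : R.IsLinked β A)
    (hroot : ∀ b, (R.splitBag β A (R.root, b)).ncard < (β R.root).ncard) (t : ι) (b : Bool) :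
    ∃ u, (R.splitBag β A (u, !b)).ncard < (β u).ncard ∧
      R.splitBag β A (t, b) ⊆ R.splitBag β A (u, b) := by
  induction t using ParentTree.induction_root (R := R) with
  | root => exact ⟨R.root, hroot _, subset_rfl⟩
  | parent t ht ih =>
    by_cases hlt : (R.splitBag β A (t, !b)).ncard < (β t).ncard
    · exact ⟨t, hlt, subset_rfl⟩
    · rw [ncard_splitBag_lt_iff, not_lt, Bool.not_not] at hlt
      obtain ⟨u, hu, hsub⟩ := ih
      exact ⟨u, hu, (splitBag_subset_parent (hA b) hlink ht hlt).trans hsub⟩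

end Splitting

section Refinement

variable {V ι : Type} [Finite V] {G : SimpleGraph V} {R : ParentTree ι}
  {β : ι → Set V} {A : Bool → Set V} {k : ℕ}

theorem ParentTree.sum_bagWeight_splitBag_lt [Fintype ι] (hA : ∀ b, IsSeparation G (A b) (A (!b)))
    (hX : (⋂ b, A b).ncard ≤ k)
    (hlink : R.IsLinked β A)
    (hroot : ∀ b, (R.splitBag β A (R.root, b)).ncard < (β R.root).ncard) (n : ℕ) :
    ∑ x : ι × Bool with (R.splitBag β A (x.1, !x.2)).ncard < (β x.1).ncard,
      bagWeight n k (R.splitBag β A x).ncard < phi n k β := by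
  have hsum (t : ι) := sum_ncard_splitBag_le (R := R) (β := β) (t := t) hA hX
  have hle (t : ι) (b : Bool) : (R.splitBag β A (t, b)).ncard ≤ (β t).ncard := by
    by_cases ht : t = R.root
    · exact ht ▸ (hroot b).le
    · exact ncard_splitBag_le (fun b => (hlink t ht b).trans <| Set.ncard_le_ncard <|
        Set.inter_subset_inter_left _ Set.inter_subset_left) b
  rw [phi_eq_sum_bagWeight, Finset.sum_filter, Fintype.sum_prod_type]
  refine Finset.sum_lt_sum (fun t _ => ?_) ⟨R.root, Finset.mem_univ _, ?_⟩
  · rw [← Finset.sum_filter]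
    exact sum_bagWeight_le (μ := fun b => (R.splitBag β A (t, b)).ncard) (hle t) (hsum t)
  · simp only [hroot, if_true, Fintype.sum_bool]
    have := hsum R.root
    rw [Fintype.sum_bool] at this
    exact bagWeight_add_lt (hroot true) (hroot false) this

theorem IsTreeDecomp.exists_phi_lt [Finite ι] (h : IsTreeDecomp G R.graph β)
    (hk : HasAdhesionLE R.graph β k) (hA : ∀ b, IsSeparation G (A b) (A (!b)))
    (hX : (⋂ b, A b).ncard ≤ k)
    (hlink : R.IsLinked β A)
    (hroot : ∀ b, (⋂ b, A b).ncard < (β R.root ∩ A b).ncard) (n : ℕ) :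
    ∃ (κ : Type) (_ : Fintype κ) (T' : SimpleGraph κ) (β' : κ → Set V),
      IsTreeDecomp G T' β' ∧ HasAdhesionLE T' β' k ∧ Nat.card κ ≤ Nat.card V + 1 ∧
      phi n k β' < phi n k β := by
  have hroot' (b : Bool) : (R.splitBag β A (R.root, b)).ncard < (β R.root).ncard :=
    ParentTree.ncard_splitBag_lt_iff.2
      ((Set.ncard_le_ncard Set.inter_subset_left).trans_lt (hroot (!b)))
  obtain ⟨κ, hκ, T', f, h', hk', hred, hcov⟩ :=
    (h.splitBag hA).exists_reduced (hk.splitBag hA hX hlink)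
  have := Fintype.ofFinite ι
  have := Fintype.ofFinite κ
  refine ⟨κ, this, T', R.splitBag β A ∘ f, h', hk', h'.natCard_le hred, ?_⟩
  rw [phi_eq_sum_bagWeight]
  refine lt_of_le_of_lt ?_ (ParentTree.sum_bagWeight_splitBag_lt hA hX hlink hroot' n)
  refine sum_le_sum_of_mutual_domination (fun x y => h'.eq_of_bag_subset hred) (fun j => ?_)
    (fun x _ => hcov x) fun s => bagWeight n k s.ncard
  obtain ⟨u, hu, hsub⟩ := ParentTree.exists_splitBag_subset hA hlink hroot' (f j).1 (f j).2
  exact ⟨(u, (f j).2), by simpa using hu, hsub⟩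

end Refinement

/-- refinement step: given a tree decomposition with adhesions of size
at most `k`, a node `s`, sets `Z₁, Z₂ ⊆ β(s)` with `|Z₁| = |Z₂| ≤ k+1`, a separation
`(A₁,A₂)` with `Z₁ ⊆ A₁`, `Z₂ ⊆ A₂`, `|A₁ ∩ A₂| < |Z₁|`, and pairwise vertex-disjoint
`Z₁–Z₂` paths `(P_x)_{x ∈ A₁ ∩ A₂}` with `x ∈ V(P_x)`, there exists a tree
decomposition of `G` with adhesions of size at most `k`, at most `n+1` nodes, and
strictly smaller potential `Φ_{G,k}`. -/
theorem refinement_step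
    {V ι : Type} [Fintype V] [Fintype ι] (G : SimpleGraph V) (k : ℕ)
    (T : SimpleGraph ι) (β : ι → Set V) (hdec : IsTreeDecomp G T β)
    (hadh : ∀ s t : ι, T.Adj s t → (β s ∩ β t).ncard ≤ k)
    (s : ι) (Z₁ Z₂ : Set V) (hZ₁ : Z₁ ⊆ β s) (hZ₂ : Z₂ ⊆ β s)
    (hcard : Z₁.ncard = Z₂.ncard) (hsize : Z₁.ncard ≤ k + 1)
    (A₁ A₂ : Set V) (hsep : IsSeparation G A₁ A₂)
    (hZA₁ : Z₁ ⊆ A₁) (hZA₂ : Z₂ ⊆ A₂)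
    (hord : (A₁ ∩ A₂).ncard < Z₁.ncard)
    (e₁ e₂ : (A₁ ∩ A₂ : Set V) → V)
    (P : ∀ x : (A₁ ∩ A₂ : Set V), G.Walk (e₁ x) (e₂ x))
    (hpath : ∀ x : (A₁ ∩ A₂ : Set V), (P x).IsPath)
    (he₁ : ∀ x : (A₁ ∩ A₂ : Set V), e₁ x ∈ Z₁)
    (he₂ : ∀ x : (A₁ ∩ A₂ : Set V), e₂ x ∈ Z₂)
    (hthrough : ∀ x : (A₁ ∩ A₂ : Set V), (x : V) ∈ (P x).support)
    (hdisj : ∀ x y : (A₁ ∩ A₂ : Set V), x ≠ y →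
      ∀ v : V, v ∈ (P x).support → v ∉ (P y).support) :
    ∃ (κ : Type) (_ : Fintype κ) (T' : SimpleGraph κ) (β' : κ → Set V),
      IsTreeDecomp G T' β' ∧
      (∀ s' t' : κ, T'.Adj s' t' → (β' s' ∩ β' t').ncard ≤ k) ∧
      Nat.card κ ≤ Fintype.card V + 1 ∧
      phi (Fintype.card V) k β' < phi (Fintype.card V) k β := by
  obtain ⟨R, rfl, rfl⟩ := ParentTree.exists_root_eq_graph_eq hdec.isTree s
  obtain ⟨S, hS, hwalk₁, hwalk₂⟩ :=
    hsep.exists_pairwiseDisjoint_walk hZA₁ hZA₂ he₁ he₂ P hpath hthrough hdisj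
  have hX : (⋂ b, cond b A₁ A₂) = A₁ ∩ A₂ := Set.inter_eq_iInter.symm
  have hA : ∀ b, IsSeparation G (cond b A₁ A₂) (cond (!b) A₁ A₂) :=
    Bool.forall_bool.2 ⟨hsep.symm, hsep⟩
  have hside : ∀ b, Z₁.ncard ≤ (β R.root ∩ cond b A₁ A₂).ncard :=
    Bool.forall_bool.2 ⟨hcard ▸ Set.ncard_le_ncard (Set.subset_inter hZ₂ hZA₂),
      Set.ncard_le_ncard (Set.subset_inter hZ₁ hZA₁)⟩
  have hwalk : ∀ b, ∀ x ∈ A₁ ∩ A₂, ∃ z ∈ β R.root, ∃ q : G.Walk z x,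
      ∀ v ∈ q.support, v ∈ S x ∩ cond b A₁ A₂ :=
    Bool.forall_bool.2 ⟨fun x hx => (hwalk₂ x hx).imp fun _ => .imp_left (@hZ₂ _),
      fun x hx => (hwalk₁ x hx).imp fun _ => .imp_left (@hZ₁ _)⟩
  simp only [← Nat.card_eq_fintype_card]
  refine hdec.exists_phi_lt hadh hA (hX ▸ by omega) (fun t ht b => ?_)
    (fun b => hX ▸ hord.trans_le (hside b)) _
  exact hX ▸ hdec.ncard_inter_below_le hS (hwalk b) ht
end

section
/- Let G be a finite graph, let k ≥ 2 be an integer, and let S ⊆ V(G) be such that every connected component D of G − S satisfies |N_G(D)| ≤ k. Let H be the torso of S in G, and let (A,B) be a separation of G of order at most k. If every connected component of H[(A \ B) ∩ S] has at most k vertices, then every vertex v ∈ (A \ B) ∩ S has degree less than k² in H. -/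
/-- `D` is a connected component of the subgraph of `G` induced by `W`:
`D` is a nonempty connected subset of `W` closed under adjacency within `W`. -/
def IsComponentOf {V : Type} (G : SimpleGraph V) (W D : Set V) : Prop :=
  D.Nonempty ∧ D ⊆ W ∧ (G.induce D).Connected ∧
    ∀ u v : V, u ∈ D → v ∈ W → G.Adj u v → v ∈ D

/-- The (open) neighborhood of a vertex set `X` in `G`. -/
def nbhd {V : Type} (G : SimpleGraph V) (X : Set V) : Set V :=
  {v | v ∉ X ∧ ∃ u ∈ X, G.Adj u v}

/-- The torso of `S` in `G`: the graph on `S` (realized on vertex set `V`, with all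
edges inside `S`) where distinct `u, v ∈ S` are adjacent iff `uv ∈ E(G)` or some
connected component `D` of `G − S` has `u, v ∈ N_G(D)`. -/
def torso {V : Type} (G : SimpleGraph V) (S : Set V) : SimpleGraph V where
  Adj u v := u ≠ v ∧ u ∈ S ∧ v ∈ S ∧
    (G.Adj u v ∨ ∃ D : Set V, IsComponentOf G Sᶜ D ∧ u ∈ nbhd G D ∧ v ∈ nbhd G D)
  symm := by
    constructor
    rintro u v ⟨hne, hu, hv, h | ⟨D, hD, h1, h2⟩⟩
    · exact ⟨hne.symm, hv, hu, Or.inl h.symm⟩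
    · exact ⟨hne.symm, hv, hu, Or.inr ⟨D, hD, h2, h1⟩⟩
  loopless := ⟨fun u h => h.1 rfl⟩

/-!
A torso neighbor of `v ∈ (A \ B) ∩ S` that also lies in `A \ B` belongs to the component of
`H[(A \ B) ∩ S]` containing `v`, so there are at most `k - 1` of these. Every other neighbor `w` is
charged to a vertex `x ∈ A ∩ B`: if `w ∈ A ∩ B`, take `x = w`; if `w ∈ B \ A`, then `vw` is not an
edge of `G`, so it comes from a component `D` of `G - S` attached to both sides of the separation,
and `D` contains some `x ∈ A ∩ B`. Each `x` is charged at most `k - 1` times: not more than once if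
`x ∈ S`, and otherwise only by vertices other than `v` in the neighborhood of the component of
`G - S` containing `x`. Hence the degree of `v` is at most `(k - 1) + k * (k - 1) = k ^ 2 - 1`.
-/

theorem encard_biUnion_le_mul {ι α : Type*} {s : Set ι} {f : ι → Set α} {m : ℕ∞}
    (hf : ∀ i ∈ s, (f i).encard ≤ m) : (⋃ i ∈ s, f i).encard ≤ s.encard * m := by
  rcases s.finite_or_infinite with hs | hs
  · lift s to Finset ι using hs
    calc (⋃ i ∈ s, f i).encard
        ≤ ∑ i ∈ s, (f i).encard := Finset.set_encard_biUnion_le s f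
      _ ≤ s.card • m := Finset.sum_le_card_nsmul s _ m hf
      _ = (s : Set ι).encard * m := by rw [Set.encard_coe_eq_coe_finsetCard, nsmul_eq_mul]
  · rcases eq_or_ne m 0 with rfl | hm
    · simpa using hf
    · simp [hs.encard_eq, ENat.top_mul hm]

section Connected

variable {V : Type*} {G : SimpleGraph V} {D P : Set V} {u v : V}

theorem connected_induce_insert (hD : (G.induce D).Preconnected) (hu : u ∈ D) (huv : G.Adj u v) :
    (G.induce (insert v D)).Connected := by
  have hunion : insert v D = D ∪ {u, v} := by grind
  rw [hunion]
  exact G.induce_union_connected hD (G.induce_pair_connected_of_adj huv).preconnected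
    ⟨u, hu, Set.mem_insert u _⟩

theorem exists_adj_mem_notMem_of_preconnected_induce (hD : (G.induce D).Preconnected)
    (hu : u ∈ D) (huP : u ∈ P) (hv : v ∈ D) (hvP : v ∉ P) :
    ∃ x ∈ D, ∃ y ∈ D, G.Adj x y ∧ x ∈ P ∧ y ∉ P := by
  obtain ⟨p⟩ := hD ⟨u, hu⟩ ⟨v, hv⟩
  obtain ⟨d, -, hfst, hsnd⟩ := p.exists_boundary_dart (Subtype.val ⁻¹' P) huP hvP
  exact ⟨d.fst, d.fst.2, d.snd, d.snd.2, d.adj, hfst, hsnd⟩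

end Connected

section Torso

variable {V : Type} {G : SimpleGraph V}

theorem exists_isComponentOf_mem {W : Set V} {v : V} (hv : v ∈ W) :
    ∃ C, IsComponentOf G W C ∧ v ∈ C := by
  let 𝒯 : Set (Set V) := {T | T ⊆ W ∧ v ∈ T ∧ (G.induce T).Connected}
  have hsingleton : {v} ∈ 𝒯 :=
    ⟨Set.singleton_subset_iff.2 hv, rfl, ⟨SimpleGraph.Preconnected.of_subsingleton⟩⟩
  have hconn : (G.induce (⋃₀ 𝒯)).Connected :=
    G.induce_sUnion_connected_of_pairwise_not_disjoint ⟨_, hsingleton⟩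
      (fun hT hT' => ⟨v, hT.2.1, hT'.2.1⟩) (fun hT => hT.2.2)
  have hsub : ⋃₀ 𝒯 ⊆ W := Set.sUnion_subset fun T hT => hT.1
  have hvmem : v ∈ ⋃₀ 𝒯 := ⟨_, hsingleton, rfl⟩
  refine ⟨⋃₀ 𝒯, ⟨⟨v, hvmem⟩, hsub, hconn, fun x y hx hy hxy => ?_⟩, hvmem⟩
  exact ⟨insert y (⋃₀ 𝒯), ⟨Set.insert_subset hy hsub, Set.mem_insert_of_mem y hvmem,
    connected_induce_insert hconn.preconnected hx hxy⟩, Set.mem_insert y _⟩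

theorem IsComponentOf.subset_of_preconnected {W D T : Set V} {x : V} (hD : IsComponentOf G W D)
    (hT : (G.induce T).Preconnected) (hTW : T ⊆ W) (hxT : x ∈ T) (hxD : x ∈ D) : T ⊆ D := by
  intro y hyT
  by_contra hyD
  obtain ⟨a, -, b, hbT, hab, haD, hbD⟩ :=
    exists_adj_mem_notMem_of_preconnected_induce hT hxT hxD hyT hyD
  exact hbD (hD.2.2.2 a b haD (hTW hbT) hab)

theorem IsComponentOf.eq_of_mem {W D E : Set V} {x : V} (hD : IsComponentOf G W D)
    (hE : IsComponentOf G W E) (hxD : x ∈ D) (hxE : x ∈ E) : D = E :=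
  (hE.subset_of_preconnected hD.2.2.1.preconnected hD.2.1 hxD hxE).antisymm
    (hD.subset_of_preconnected hE.2.2.1.preconnected hE.2.1 hxE hxD)

theorem IsSeparation.exists_mem_inter_of_preconnected {A B T : Set V} {a b : V}
    (hsep : IsSeparation G A B) (hT : (G.induce T).Preconnected)
    (haT : a ∈ T) (ha : a ∈ A \ B) (hbT : b ∈ T) (hb : b ∈ B \ A) : ∃ x ∈ T, x ∈ A ∩ B := by
  obtain ⟨x, -, y, hyT, hxy, hx, hy⟩ :=
    exists_adj_mem_notMem_of_preconnected_induce hT haT ha hbT (fun h => hb.2 h.1)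
  have hyAB : y ∈ A ∪ B := hsep.1 ▸ Set.mem_univ y
  have hyBA : y ∉ B \ A := hsep.2 x y hxy hx
  exact ⟨y, hyT, by grind⟩

theorem IsSeparation.exists_mem_inter_of_mem_nbhd {A B D : Set V} {v w : V}
    (hsep : IsSeparation G A B) (hD : (G.induce D).Preconnected)
    (hv : v ∈ A \ B) (hvD : v ∈ nbhd G D) (hw : w ∈ B \ A) (hwD : w ∈ nbhd G D) :
    ∃ x ∈ D, x ∈ A ∩ B := by
  obtain ⟨-, a, haD, hav⟩ := hvD
  obtain ⟨-, b, hbD, hbw⟩ := hwD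
  have hvconn := connected_induce_insert hD haD hav
  have hconn := connected_induce_insert hvconn.preconnected (Set.mem_insert_of_mem v hbD) hbw
  obtain ⟨x, hx, hxAB⟩ := hsep.exists_mem_inter_of_preconnected hconn.preconnected
    (Set.mem_insert_of_mem w (Set.mem_insert v D)) hv (Set.mem_insert w _) hw
  exact ⟨x, by grind, hxAB⟩

/-- The neighbors of `v` in the torso of `S` that are charged to the vertex `x`: either `x` itself,
or those joined to `v` through the component of `G - S` containing `x`. -/
def torsoNeighborsVia (G : SimpleGraph V) (S : Set V) (v x : V) : Set V :=
  {w ∈ (torso G S).neighborSet v |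
    w = x ∨ ∃ D, IsComponentOf G Sᶜ D ∧ x ∈ D ∧ v ∈ nbhd G D ∧ w ∈ nbhd G D}

variable {S : Set V} {v : V}

theorem encard_torsoNeighborsVia_le {m : ℕ∞} (hm : 1 ≤ m)
    (hS : ∀ D, IsComponentOf G Sᶜ D → v ∈ nbhd G D → (nbhd G D \ {v}).encard ≤ m) (x : V) :
    (torsoNeighborsVia G S v x).encard ≤ m := by
  by_cases hx : ∃ D, IsComponentOf G Sᶜ D ∧ x ∈ D ∧ v ∈ nbhd G D
  · obtain ⟨D, hD, hxD, hvD⟩ := hx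
    have hsub : torsoNeighborsVia G S v x ⊆ nbhd G D \ {v} := by
      rintro w ⟨⟨hvw, -, hwS, -⟩, rfl | ⟨E, hE, hxE, -, hwE⟩⟩
      · exact absurd hwS (hD.2.1 hxD)
      · exact ⟨hD.eq_of_mem hE hxD hxE ▸ hwE, hvw.symm⟩
    exact (Set.encard_le_encard hsub).trans (hS D hD hvD)
  · have hsub : torsoNeighborsVia G S v x ⊆ {x} := by
      rintro w ⟨-, rfl | ⟨D, hD, hxD, hvD, -⟩⟩
      · rfl
      · exact absurd ⟨D, hD, hxD, hvD⟩ hx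
    exact (Set.encard_le_encard hsub).trans ((Set.encard_singleton x).trans_le hm)

variable {A B : Set V}

theorem IsSeparation.exists_mem_torsoNeighborsVia {w : V} (hsep : IsSeparation G A B)
    (hv : v ∈ A \ B) (hw : w ∈ B) (hvw : (torso G S).Adj v w) :
    ∃ x ∈ A ∩ B, w ∈ torsoNeighborsVia G S v x := by
  by_cases hwA : w ∈ A
  · exact ⟨w, ⟨hwA, hw⟩, hvw, Or.inl rfl⟩
  · rcases hvw.2.2.2 with hadj | ⟨D, hD, hvD, hwD⟩
    · exact absurd ⟨hw, hwA⟩ (hsep.2 v w hadj hv)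
    · obtain ⟨x, hxD, hx⟩ :=
        hsep.exists_mem_inter_of_mem_nbhd hD.2.2.1.preconnected hv hvD ⟨hw, hwA⟩ hwD
      exact ⟨x, hx, hvw, Or.inr ⟨D, hD, hxD, hvD, hwD⟩⟩

theorem IsSeparation.neighborSet_torso_subset {C : Set V} (hsep : IsSeparation G A B)
    (hC : IsComponentOf (torso G S) ((A \ B) ∩ S) C) (hv : v ∈ C) :
    (torso G S).neighborSet v ⊆ (C \ {v}) ∪ ⋃ x ∈ A ∩ B, torsoNeighborsVia G S v x := by
  intro w hvw
  by_cases hwB : w ∈ B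
  · exact Or.inr <| Set.mem_iUnion₂.2 <| by
      simpa only [exists_prop] using hsep.exists_mem_torsoNeighborsVia (hC.2.1 hv).1 hwB hvw
  · have hwA : w ∈ A := (hsep.1.symm ▸ Set.mem_univ w : w ∈ A ∪ B).resolve_right hwB
    exact Or.inl ⟨hC.2.2.2 v w hv ⟨⟨hwA, hwB⟩, hvw.2.2.1⟩ hvw, hvw.1.symm⟩

theorem IsSeparation.encard_neighborSet_torso_le {C : Set V} {m : ℕ∞} (hsep : IsSeparation G A B)
    (hC : IsComponentOf (torso G S) ((A \ B) ∩ S) C) (hv : v ∈ C) (hm : 1 ≤ m)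
    (hS : ∀ D, IsComponentOf G Sᶜ D → v ∈ nbhd G D → (nbhd G D \ {v}).encard ≤ m) :
    ((torso G S).neighborSet v).encard ≤ (C \ {v}).encard + (A ∩ B).encard * m :=
  calc ((torso G S).neighborSet v).encard
      ≤ ((C \ {v}) ∪ ⋃ x ∈ A ∩ B, torsoNeighborsVia G S v x).encard :=
        Set.encard_le_encard (hsep.neighborSet_torso_subset hC hv)
    _ ≤ (C \ {v}).encard + (⋃ x ∈ A ∩ B, torsoNeighborsVia G S v x).encard :=
        Set.encard_union_le _ _
    _ ≤ (C \ {v}).encard + (A ∩ B).encard * m := by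
        gcongr
        exact encard_biUnion_le_mul fun x _ => encard_torsoNeighborsVia_le hm hS x

end Torso

theorem degree_lt_of_small_components_general
    {V : Type} (G : SimpleGraph V) (k : ℕ) (hk : 2 ≤ k)
    (S : Set V) (hS : ∀ D : Set V, IsComponentOf G Sᶜ D → (nbhd G D).encard ≤ k)
    (A B : Set V) (hsep : IsSeparation G A B) (hord : (A ∩ B).encard ≤ k)
    (hcomp : ∀ D : Set V, IsComponentOf (torso G S) ((A \ B) ∩ S) D → D.encard ≤ k) :
    ∀ v ∈ (A \ B) ∩ S, ((torso G S).neighborSet v).encard < k ^ 2 := by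
  intro v hv
  obtain ⟨m, rfl⟩ : ∃ m, k = m + 1 := ⟨k - 1, by lia⟩
  obtain ⟨C, hC, hvC⟩ := exists_isComponentOf_mem (G := torso G S) hv
  have hdiff {X : Set V} (hvX : v ∈ X) (hX : X.encard ≤ (m + 1 : ℕ)) : (X \ {v}).encard ≤ m := by
    rw [← Set.encard_sdiff_singleton_add_one hvX, Nat.cast_add_one] at hX
    exact ENat.add_le_add_iff_right ENat.one_ne_top |>.1 hX
  calc ((torso G S).neighborSet v).encard
      ≤ (C \ {v}).encard + (A ∩ B).encard * m :=
        hsep.encard_neighborSet_torso_le hC hvC (Nat.one_le_cast.2 (by lia))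
          fun D hD hvD => hdiff hvD (hS D hD)
    _ ≤ m + (m + 1 : ℕ) * m := by
        gcongr
        exact hdiff hvC (hcomp C hC)
    _ < (m + 1 : ℕ) ^ 2 := by exact_mod_cast (by lia : m + (m + 1) * m < (m + 1) ^ 2)

/-- if every component of `G − S` has at most `k` attachment vertices,
`(A,B)` is a separation of order at most `k`, and every connected component of
`H[(A \ B) ∩ S]` (where `H` is the torso of `S`) has at most `k` vertices, then
every vertex of `(A \ B) ∩ S` has degree less than `k²` in `H`. -/
theorem degree_lt_of_small_components
    {V : Type} [Fintype V] (G : SimpleGraph V) (k : ℕ) (hk : 2 ≤ k)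
    (S : Set V) (hS : ∀ D : Set V, IsComponentOf G Sᶜ D → (nbhd G D).ncard ≤ k)
    (A B : Set V) (hsep : IsSeparation G A B) (hord : (A ∩ B).ncard ≤ k)
    (hcomp : ∀ D : Set V, IsComponentOf (torso G S) ((A \ B) ∩ S) D → D.ncard ≤ k) :
    ∀ v ∈ (A \ B) ∩ S, ((torso G S).neighborSet v).ncard < k ^ 2 := by
  simp only [← Nat.cast_le (α := ℕ∞), ← Nat.cast_lt (α := ℕ∞), (Set.toFinite _).cast_ncard_eq,
    Nat.cast_pow] at hS hord hcomp ⊢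
  exact degree_lt_of_small_components_general G k hk S hS A B hsep hord hcomp
end

section
/- Let G be a finite graph, let k be a nonnegative integer, let S ⊆ V(G) be such that every connected component D of G − S satisfies |N_G(D)| ≤ k, and let (A,B) be a separation of G of order at most k. Then there are at most k touched components of G − S and at most k² touched vertices of S. -/
/-- A connected component `D` of `G − S` is touched (w.r.t. a separation `(A,B)`)
if `D ∩ A ∩ B ≠ ∅`. -/
def TouchedComp {V : Type} (G : SimpleGraph V) (S A B D : Set V) : Prop :=
  IsComponentOf G Sᶜ D ∧ (D ∩ (A ∩ B)).Nonempty

/-- A vertex `t ∈ S` is touched if `t ∈ A ∩ B` or `t ∈ N_G(D)` for some touched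
component `D`. -/
def TouchedVertex {V : Type} (G : SimpleGraph V) (S A B : Set V) (t : V) : Prop :=
  t ∈ S ∧ (t ∈ A ∩ B ∨ ∃ D : Set V, TouchedComp G S A B D ∧ t ∈ nbhd G D)

/-!
Components of `G − S` are pairwise disjoint, so picking a vertex of `A ∩ B` in each touched one
embeds the touched components into `(A ∩ B) \ S`. A touched vertex lies in `A ∩ B ∩ S` or in the
neighborhood of a touched component, so there are at most
`|A ∩ B ∩ S| + |(A ∩ B) \ S| * k ≤ |A ∩ B| * k` of them.
-/

section Counting

variable {α ι : Type*} {s : Set ι} {f : ι → Set α}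

theorem encard_biUnion_le_encard_mul {m : ℕ∞} (hf : ∀ i ∈ s, (f i).encard ≤ m) :
    (⋃ i ∈ s, f i).encard ≤ s.encard * m := by
  rcases s.finite_or_infinite with hs | hs
  · lift s to Finset ι using hs
    calc (⋃ i ∈ s, f i).encard
        ≤ ∑ i ∈ s, (f i).encard := s.set_encard_biUnion_le f
      _ ≤ s.card • m := Finset.sum_le_card_nsmul s _ m hf
      _ = (s : Set ι).encard * m := by rw [nsmul_eq_mul, Set.encard_coe_eq_coe_finsetCard]
  · rcases eq_or_ne m 0 with rfl | hm
    · have hempty : ∀ i ∈ s, f i = ∅ := fun i hi ↦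
        Set.encard_eq_zero.1 (nonpos_iff_eq_zero.1 (hf i hi))
      simp only [Set.iUnion₂_congr hempty, Set.iUnion_empty, Set.encard_empty, zero_le]
    · simp only [hs.encard_eq, ENat.top_mul hm, le_top]

theorem encard_le_encard_of_pairwiseDisjoint {X : Set α} (hs : s.PairwiseDisjoint f)
    (hX : ∀ i ∈ s, (f i ∩ X).Nonempty) : s.encard ≤ X.encard := by
  choose g hgf hgX using hX
  refine Function.Embedding.encard_le ⟨fun i ↦ ⟨g i i.2, hgX i i.2⟩, fun i j hij ↦ ?_⟩
  have hg : g i i.2 = g j j.2 := congrArg Subtype.val hij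
  exact Subtype.ext (hs.elim_set i.2 j.2 _ (hgf i i.2) (hg ▸ hgf j j.2))

end Counting

theorem subset_of_induce_preconnected {V : Type*} {G : SimpleGraph V} {C D : Set V} {x : V}
    (hC : (G.induce C).Preconnected) (hD : ∀ u ∈ D, ∀ v ∈ C, G.Adj u v → v ∈ D)
    (hxC : x ∈ C) (hxD : x ∈ D) : C ⊆ D := by
  intro y hyC
  by_contra hyD
  obtain ⟨p⟩ := hC ⟨x, hxC⟩ ⟨y, hyC⟩
  obtain ⟨d, -, hfst, hsnd⟩ := p.exists_boundary_dart (Subtype.val ⁻¹' D) hxD hyD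
  exact hsnd (hD _ hfst _ d.snd.2 d.adj)

section Touched

variable {V : Type} {G : SimpleGraph V} {W S A B D D' : Set V}

theorem IsComponentOf.subset_of_mem {x : V} (hD : IsComponentOf G W D)
    (hD' : IsComponentOf G W D') (hx : x ∈ D) (hx' : x ∈ D') : D ⊆ D' := by
  obtain ⟨-, hDW, hconn, -⟩ := hD
  obtain ⟨-, -, -, hclosed⟩ := hD'
  exact subset_of_induce_preconnected hconn.preconnected
    (fun u hu v hv ↦ hclosed u v hu (hDW hv)) hx hx'

theorem pairwiseDisjoint_isComponentOf (G : SimpleGraph V) (W : Set V) :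
    {D | IsComponentOf G W D}.PairwiseDisjoint id := by
  intro D hD D' hD' hne
  refine Set.disjoint_left.2 fun x hx hx' ↦ hne ?_
  exact (hD.subset_of_mem hD' hx hx').antisymm (hD'.subset_of_mem hD hx' hx)

theorem encard_touchedComp_le (G : SimpleGraph V) (S A B : Set V) :
    {D | TouchedComp G S A B D}.encard ≤ ((A ∩ B) \ S).encard := by
  refine encard_le_encard_of_pairwiseDisjoint
    ((pairwiseDisjoint_isComponentOf G Sᶜ).subset fun D hD ↦ hD.1) ?_
  rintro D ⟨⟨-, hDS, -⟩, x, hxD, hxAB⟩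
  exact ⟨x, hxD, hxAB, hDS hxD⟩

theorem setOf_touchedVertex_subset (G : SimpleGraph V) (S A B : Set V) :
    {t | TouchedVertex G S A B t} ⊆
      (A ∩ B ∩ S) ∪ ⋃ D ∈ {D | TouchedComp G S A B D}, nbhd G D := by
  rintro t ⟨htS, htAB | ⟨D, hD, htD⟩⟩
  · exact Or.inl ⟨htAB, htS⟩
  · exact Or.inr (Set.mem_biUnion hD htD)

theorem encard_touchedVertex_le {m : ℕ∞}
    (hm : ∀ D, TouchedComp G S A B D → (nbhd G D).encard ≤ m) :
    {t | TouchedVertex G S A B t}.encard ≤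
      (A ∩ B ∩ S).encard + ((A ∩ B) \ S).encard * m :=
  calc {t | TouchedVertex G S A B t}.encard
      ≤ ((A ∩ B ∩ S) ∪ ⋃ D ∈ {D | TouchedComp G S A B D}, nbhd G D).encard :=
        Set.encard_le_encard (setOf_touchedVertex_subset G S A B)
    _ ≤ (A ∩ B ∩ S).encard + (⋃ D ∈ {D | TouchedComp G S A B D}, nbhd G D).encard :=
        Set.encard_union_le _ _
    _ ≤ (A ∩ B ∩ S).encard + {D | TouchedComp G S A B D}.encard * m := by
        gcongr
        exact encard_biUnion_le_encard_mul hm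
    _ ≤ (A ∩ B ∩ S).encard + ((A ∩ B) \ S).encard * m := by
        gcongr
        exact encard_touchedComp_le G S A B

end Touched

theorem touched_bounds_general {V : Type} (G : SimpleGraph V) (k : ℕ∞) (S A B : Set V)
    (hS : ∀ D, TouchedComp G S A B D → (nbhd G D).encard ≤ k) (hord : (A ∩ B).encard ≤ k) :
    {D | TouchedComp G S A B D}.encard ≤ k ∧ {t | TouchedVertex G S A B t}.encard ≤ k ^ 2 := by
  have hsplit : ((A ∩ B) \ S).encard + (A ∩ B ∩ S).encard = (A ∩ B).encard :=
    Set.encard_sdiff_add_encard_inter _ _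
  have hinter : (A ∩ B ∩ S).encard ≤ k := (Set.encard_mono Set.inter_subset_left).trans hord
  have hinter_mul : (A ∩ B ∩ S).encard ≤ (A ∩ B ∩ S).encard * k := by
    rcases eq_or_ne k 0 with rfl | hk
    · rwa [mul_zero]
    · exact le_mul_of_one_le_right' (Order.one_le_iff_pos.2 (pos_iff_ne_zero.2 hk))
  refine ⟨(encard_touchedComp_le G S A B).trans ((Set.encard_mono Set.sdiff_subset).trans hord), ?_⟩
  calc {t | TouchedVertex G S A B t}.encard
      ≤ (A ∩ B ∩ S).encard + ((A ∩ B) \ S).encard * k := encard_touchedVertex_le hS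
    _ ≤ (A ∩ B ∩ S).encard * k + ((A ∩ B) \ S).encard * k := by gcongr
    _ = (A ∩ B).encard * k := by rw [← add_mul, add_comm, hsplit]
    _ ≤ k ^ 2 := by
        rw [sq]
        gcongr

/-- if every component of `G − S` has at most `k` attachment vertices
and `(A,B)` is a separation of `G` of order at most `k`, then there are at most `k`
touched components of `G − S` and at most `k²` touched vertices of `S`. -/
theorem touched_bounds
    {V : Type} [Fintype V] (G : SimpleGraph V) (k : ℕ)
    (S : Set V) (hS : ∀ D : Set V, IsComponentOf G Sᶜ D → (nbhd G D).ncard ≤ k)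
    (A B : Set V) (hsep : IsSeparation G A B) (hord : (A ∩ B).ncard ≤ k) :
    {D : Set V | TouchedComp G S A B D}.ncard ≤ k ∧
      {t : V | TouchedVertex G S A B t}.ncard ≤ k ^ 2 := by
  simp only [← Nat.cast_le (α := ℕ∞), Nat.cast_pow, Set.coe_ncard_eq_encard] at hS hord ⊢
  exact touched_bounds_general G k S A B (fun D hD ↦ hS D hD.1) hord
end

section
/- Let G be a finite graph, let k be a nonnegative integer, let p be a positive integer, and let B ⊆ V(G) be a set with |B| > 3k that is (k,k)-edge-unbreakable in G. Then for every function f : V(G) → {1,…,p} whose cost in G is at most k, there exists j ∈ {1,…,p} such that at most k vertices v ∈ B satisfy f(v) ≠ j. -/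
/-- An edge cut of a graph: a pair of disjoint vertex sets covering `V(G)`. -/
def IsEdgeCut {V : Type} (A B : Set V) : Prop :=
  Disjoint A B ∧ A ∪ B = Set.univ

/-- The order of an edge cut `(A,B)` in `G`. -/
noncomputable def edgeCutOrder {V : Type} (G : SimpleGraph V) (A B : Set V) : ℕ :=
  {e : Sym2 V | ∃ u v : V, e = s(u, v) ∧ G.Adj u v ∧ u ∈ A ∧ v ∈ B}.ncard

/-- `S` is `(q,k)`-edge-unbreakable in `G`. -/
def IsEdgeUnbreakable {V : Type} (G : SimpleGraph V) (S : Set V) (q k : ℕ) : Prop :=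
  ∀ A B : Set V, IsEdgeCut A B → edgeCutOrder G A B ≤ k →
    (A ∩ S).ncard ≤ q ∨ (B ∩ S).ncard ≤ q

/-- The cost of a function `f` on the vertices of `G`: the number of edges `uv` of
`G` with `f(u) ≠ f(v)`. -/
noncomputable def cutCost {V α : Type} (G : SimpleGraph V) (f : V → α) : ℕ :=
  {e : Sym2 V | ∃ u v : V, e = s(u, v) ∧ G.Adj u v ∧ f u ≠ f v}.ncard

/-!
Every set `J` of values splits `V(G)` into `f⁻¹(J)` and its complement, an edge cut crossed only by
edges counted in the cost of `f`. Hence one of the two sides, and only one, has at most `q` vertices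
in `B`. Call `J` small if this side is `f⁻¹(J)`. A union of two small sets accounts for at most `2q`
of the more than `3q` vertices of `B`, so its complement is not small and it is small itself. If
every singleton were small, so would be the finite set `f(B)`, which accounts for all of `B`. The
desired value is a `j` with `{j}` not small.
-/

/-- The edges of `G` whose ends have different `f`-values. It is the set counted by `cutCost G f`,
which is the junk value `0` when this set is infinite. -/
def bichromaticEdges {V α : Type} (G : SimpleGraph V) (f : V → α) : Set (Sym2 V) :=
  {e | ∃ u v : V, e = s(u, v) ∧ G.Adj u v ∧ f u ≠ f v}

theorem isEdgeCut_compl {V : Type} (A : Set V) : IsEdgeCut A Aᶜ :=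
  ⟨disjoint_compl_right, Set.union_compl_self A⟩

section Coloring

variable {V α : Type} {G : SimpleGraph V} {f : V → α}

theorem edgeCutOrder_preimage_compl_le_cutCost (hfin : (bichromaticEdges G f).Finite)
    (J : Set α) : edgeCutOrder G (f ⁻¹' J) (f ⁻¹' J)ᶜ ≤ cutCost G f := by
  refine Set.ncard_le_ncard ?_ hfin
  rintro e ⟨u, v, he, hadj, hu, hv⟩
  exact ⟨u, v, he, hadj, ne_of_mem_of_not_mem (s := J) hu hv⟩

theorem IsEdgeUnbreakable.ncard_inter_preimage_le_or_ncard_sdiff_preimage_le {B : Set V} {q k : ℕ}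
    (hunb : IsEdgeUnbreakable G B q k) (hfin : (bichromaticEdges G f).Finite)
    (hcost : cutCost G f ≤ k) (J : Set α) :
    (B ∩ f ⁻¹' J).ncard ≤ q ∨ (B \ f ⁻¹' J).ncard ≤ q := by
  rw [Set.sdiff_eq, Set.inter_comm B, Set.inter_comm B]
  exact hunb _ _ (isEdgeCut_compl _)
    ((edgeCutOrder_preimage_compl_le_cutCost hfin J).trans hcost)

end Coloring

section Majority

variable {V α : Type*} {B : Set V} {q : ℕ}

theorem ncard_inter_union_le_of_or {X Y : Set V} (hB : 3 * q < B.ncard)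
    (hX : (B ∩ X).ncard ≤ q) (hY : (B ∩ Y).ncard ≤ q)
    (hXY : (B ∩ (X ∪ Y)).ncard ≤ q ∨ (B \ (X ∪ Y)).ncard ≤ q) :
    (B ∩ (X ∪ Y)).ncard ≤ q := by
  refine hXY.resolve_right fun hsdiff ↦ hB.not_ge ?_
  have hBfin : B.Finite := Set.finite_of_ncard_pos (Nat.zero_lt_of_lt hB)
  calc B.ncard = (B ∩ (X ∪ Y)).ncard + (B \ (X ∪ Y)).ncard :=
        (Set.ncard_inter_add_ncard_sdiff_eq_ncard B (X ∪ Y) hBfin).symm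
    _ ≤ ((B ∩ X).ncard + (B ∩ Y).ncard) + (B \ (X ∪ Y)).ncard := by
        rw [Set.inter_union_distrib_left]
        gcongr
        exact Set.ncard_union_le _ _
    _ ≤ 3 * q := by omega

theorem ncard_inter_preimage_le_of_forall_singleton {f : V → α} (hB : 3 * q < B.ncard)
    (hsplit : ∀ J : Set α, (B ∩ f ⁻¹' J).ncard ≤ q ∨ (B \ f ⁻¹' J).ncard ≤ q)
    (hsingle : ∀ j, (B ∩ f ⁻¹' {j}).ncard ≤ q) {J : Set α} (hJ : J.Finite) :
    (B ∩ f ⁻¹' J).ncard ≤ q := by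
  induction J, hJ using Set.Finite.induction_on with
  | empty => simp
  | @insert j J _ _ ih =>
    have hsplit_insert := hsplit (insert j J)
    rw [Set.insert_eq, Set.preimage_union] at hsplit_insert ⊢
    exact ncard_inter_union_le_of_or hB (hsingle j) ih hsplit_insert

theorem exists_ncard_ne_le_of_forall_preimage {f : V → α} (hB : 3 * q < B.ncard)
    (hsplit : ∀ J : Set α, (B ∩ f ⁻¹' J).ncard ≤ q ∨ (B \ f ⁻¹' J).ncard ≤ q) :
    ∃ j, {v ∈ B | f v ≠ j}.ncard ≤ q := by
  by_contra! hne
  have hBfin : B.Finite := Set.finite_of_ncard_pos (Nat.zero_lt_of_lt hB)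
  have hsingle (j : α) : (B ∩ f ⁻¹' {j}).ncard ≤ q :=
    (hsplit {j}).resolve_right (hne j).not_ge
  have himage : (B ∩ f ⁻¹' (f '' B)).ncard ≤ q :=
    ncard_inter_preimage_le_of_forall_singleton hB hsplit hsingle (hBfin.image f)
  rw [Set.inter_eq_left.mpr (Set.subset_preimage_image f B)] at himage
  omega

end Majority

theorem majority_value_of_edgeUnbreakable_general
    {V α : Type} (G : SimpleGraph V) (q k : ℕ)
    (B : Set V) (hB : 3 * q < B.ncard)
    (hunb : IsEdgeUnbreakable G B q k)
    (f : V → α) (hfin : (bichromaticEdges G f).Finite) (hcost : cutCost G f ≤ k) :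
    ∃ j : α, {v ∈ B | f v ≠ j}.ncard ≤ q :=
  exists_ncard_ne_le_of_forall_preimage hB
    (hunb.ncard_inter_preimage_le_or_ncard_sdiff_preimage_le hfin hcost)

/-- if `B` has more than `3k` vertices and is `(k,k)`-edge-unbreakable
in `G`, then every `f : V(G) → {1,…,p}` of cost at most `k` has a majority value `j`
such that at most `k` vertices of `B` get a value other than `j`. -/
theorem majority_value_of_edgeUnbreakable
    {V : Type} [Fintype V] (G : SimpleGraph V) (k p : ℕ) (hp : 0 < p)
    (B : Set V) (hB : 3 * k < B.ncard)
    (hunb : IsEdgeUnbreakable G B k k)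
    (f : V → Fin p) (hcost : cutCost G f ≤ k) :
    ∃ j : Fin p, {v ∈ B | f v ≠ j}.ncard ≤ k := by
  exact majority_value_of_edgeUnbreakable_general G k k B hB hunb f (Set.toFinite _) hcost
end
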